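/- In the semidirect-product setup G = F ⋊ ⟨τ⟩ with subsets X2, X3 ⊆ G built from an ordering A_0, ..., A_{l−1} of the F_q-hyperplanes of F such that S = ⋃_{i=0}^{l−1}(F\A_i)τ^i is inverse-closed in G, the set D = X2 ∪ X3 is a reversible identity-free divisible difference set in G relative to the subgroup F with parameters m = l = (q^r−1)/(q−1), n = q^r, k = q^{r−1}(l + q − 2), λ1 = q^{r−1}(q−1) + q^r(q^{r−2}−1)/(q−1), λ2 = q^{r−2}(2q + l − 4); equivalently, Cay(G, X2 ∪ X3) is a divisible design graph with parameters (q^r·l, k, λ1, λ2, l, q^r) whose canonical partition is into the cosets of F in G. Moreover λ1 = λ2 if and only if q = 3. -/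

import Mathlib

open Classical

/-!
Only a normal abelian subgroup `N = ι V` and a transversal `c` of its cosets matter, not the
semidirect product structure. The complement of `S` is the union of the `ι (A i) * c i`, and
`X2 ∪ X3` is its symmetric difference with `N`, which is why it inherits reversibility from `S`.

Let `D` be `X2 ∪ X3`. For `g ∈ N` one counts the `d ∈ D` with `g * d ∈ D`, and left multiplication
by `g` is a translation on each coset of `N`. For `g ∉ N` reversibility allows counting the `d ∈ D`
with `d * g ∈ D` instead, and right multiplication by `g` carries each coset to a different one, by
a translation in the coordinates given by `c`. Apart from the complemented layer, both counts are
sums of cardinalities of `A i ∩ (A j - w)`: if `i = j` this set is `A i` or empty, according to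
whether `w ∈ A i`, and if `i ≠ j` it is a coset of `A i ⊓ A j`. Complementing the layer of `1`
changes only the terms involving that layer. What remains is the number of hyperplanes, and of those
through a given nonzero vector.
-/

open Module Set

section DifferenceSets

variable {G : Type*} [Group G] {D N : Set G} {n k l1 l2 : ℕ}

/-- The number of pairs `(d₁, d₂) ∈ D × D` with `d₁ d₂⁻¹ = g`. -/
noncomputable def differenceCount (D : Set G) (g : G) : ℕ :=
  Nat.card {pr : G × G // pr.1 ∈ D ∧ pr.2 ∈ D ∧ pr.1 * pr.2⁻¹ = g}

theorem differenceCount_eq_ncard_mul_left (D : Set G) (g : G) :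
    differenceCount D g = {d | d ∈ D ∧ g * d ∈ D}.ncard :=
  Nat.card_congr
    { toFun := fun ⟨pr, h₁, h₂, h⟩ => ⟨pr.2, h₂, by rwa [← h, inv_mul_cancel_right]⟩
      invFun := fun ⟨d, hd, hgd⟩ => ⟨(g * d, d), hgd, hd, mul_inv_cancel_right g d⟩
      left_inv := by rintro ⟨⟨a, b⟩, h₁, h₂, rfl⟩; simp
      right_inv := by rintro ⟨d, hd, hgd⟩; rfl }

theorem differenceCount_eq_ncard_mul_right (hD : D⁻¹ = D) (g : G) :
    differenceCount D g = {d | d ∈ D ∧ d * g ∈ D}.ncard := by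
  have hinv (d : G) (hd : d ∈ D) : d⁻¹ ∈ D := by rwa [← Set.mem_inv, hD]
  exact Nat.card_congr
    { toFun := fun ⟨pr, h₁, h₂, h⟩ =>
        ⟨pr.1⁻¹, hinv _ h₁, by rw [← h, inv_mul_cancel_left]; exact hinv _ h₂⟩
      invFun := fun ⟨d, hd, hdg⟩ => ⟨(d⁻¹, (d * g)⁻¹), hinv _ hd, hinv _ hdg, by group⟩
      left_inv := by rintro ⟨⟨a, b⟩, h₁, h₂, rfl⟩; simp
      right_inv := by rintro ⟨d, hd, hdg⟩; simp }

/-- `D` is a reversible identity-free divisible difference set relative to `N`. The parameters are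
those of the paper, except that `m`, the number of cosets of `N`, is left implicit. -/
structure IsReversibleDDS (D N : Set G) (n k l1 l2 : ℕ) : Prop where
  inv_eq : D⁻¹ = D
  one_notMem : 1 ∉ D
  card_eq : Nat.card D = k
  card_base_eq : Nat.card N = n
  count_of_mem : ∀ g ∈ N, g ≠ 1 → differenceCount D g = l1
  count_of_notMem : ∀ g ∉ N, differenceCount D g = l2

namespace IsReversibleDDS

theorem differenceCount_eq_ite (h : IsReversibleDDS D N n k l1 l2) {g : G} (hg : g ≠ 1)
    [Decidable (g ∈ N)] : differenceCount D g = if g ∈ N then l1 else l2 := by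
  split_ifs with hN
  exacts [h.count_of_mem g hN hg, h.count_of_notMem g hN]

theorem card_neighbors (h : IsReversibleDDS D N n k l1 l2) (g : G) :
    Nat.card {x : G // x * g⁻¹ ∈ D} = k :=
  (Nat.card_congr ((Equiv.mulRight g⁻¹).subtypeEquiv fun _ => Iff.rfl)).trans h.card_eq

theorem card_common_neighbors (h : IsReversibleDDS D N n k l1 l2) {g₁ g₂ : G} (hg : g₁ ≠ g₂)
    [Decidable (g₁ * g₂⁻¹ ∈ N)] :
    Nat.card {x : G // x * g₁⁻¹ ∈ D ∧ x * g₂⁻¹ ∈ D} = if g₁ * g₂⁻¹ ∈ N then l1 else l2 := by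
  rw [← h.differenceCount_eq_ite (mt mul_inv_eq_one.1 hg),
    differenceCount_eq_ncard_mul_right h.inv_eq]
  exact Nat.card_congr ((Equiv.mulRight g₁⁻¹).subtypeEquiv fun x => by simp [← mul_assoc])

end IsReversibleDDS

end DifferenceSets

section Layers

variable {V I G : Type*} [Group G] {ι : V → G} {c : I → G} {i₀ : I}

/-- `ι` embeds the additive group `V` as a normal subgroup of `G`, and `c` is a transversal of its
cosets, so that `(x, i) ↦ ι x * c i` are coordinates on `G`. -/
structure IsNormalTransversal [AddCommGroup V] (ι : V → G) (c : I → G) : Prop where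
  map_add : ∀ x y, ι (x + y) = ι x * ι y
  conj_mem : ∀ g x, g * ι x * g⁻¹ ∈ range ι
  bijective : Function.Bijective fun p : V × I => ι p.1 * c p.2

/-- The subset of `G` whose part in the coset of `c i` is `L i`. -/
def layered (ι : V → G) (c : I → G) (L : I → Set V) : Set G :=
  {g | ∃ i, ∃ x ∈ L i, g = ι x * c i}

/-- The layered set of `L` with the layer at `i₀` replaced by its complement: the set `X2 ∪ X3`
when `c i₀ = 1` and the layers are the hyperplanes. -/
def switchedLayered (ι : V → G) (c : I → G) (i₀ : I) (L : I → Set V) : Set G :=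
  layered ι c (Function.update L i₀ (L i₀)ᶜ)

theorem switchedLayered_eq_union (h₀ : c i₀ = 1) (L : I → Set V) :
    switchedLayered ι c i₀ L = ι '' (L i₀)ᶜ ∪ {g | ∃ i, i ≠ i₀ ∧ ∃ x ∈ L i, g = ι x * c i} := by
  ext g
  simp only [switchedLayered, layered, mem_union, mem_ofPred_eq, mem_image]
  constructor
  · rintro ⟨i, x, hx, rfl⟩
    by_cases hi : i = i₀
    · subst hi
      exact .inl ⟨x, by simpa using hx, by simp [h₀]⟩
    · exact .inr ⟨i, hi, x, by simpa [hi] using hx, rfl⟩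
  · rintro (⟨x, hx, rfl⟩ | ⟨i, hi, x, hx, rfl⟩)
    · exact ⟨i₀, x, by simpa using hx, by simp [h₀]⟩
    · exact ⟨i, x, by simpa [hi] using hx, rfl⟩

namespace IsNormalTransversal

variable [AddCommGroup V] (hc : IsNormalTransversal ι c)
include hc

theorem map_zero : ι 0 = 1 := by
  simpa using hc.map_add 0 0

theorem map_neg (x : V) : ι (-x) = (ι x)⁻¹ := by
  rw [eq_inv_iff_mul_eq_one, ← hc.map_add, neg_add_cancel, hc.map_zero]

theorem inv_range : (range ι)⁻¹ = range ι := by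
  ext g
  constructor
  · rintro ⟨x, hx⟩
    exact ⟨-x, by rw [hc.map_neg, hx, inv_inv]⟩
  · rintro ⟨x, rfl⟩
    exact ⟨-x, hc.map_neg x⟩

theorem mul_eq_mul_iff {x y : V} {i j : I} : ι x * c i = ι y * c j ↔ x = y ∧ i = j :=
  hc.bijective.1.eq_iff.trans Prod.mk_inj

theorem injective [Nonempty I] : Function.Injective ι := fun _ _ h =>
  (hc.mul_eq_mul_iff.1 (congrArg (· * c (Classical.arbitrary I)) h)).1

theorem exists_eq_mul (g : G) : ∃ x i, g = ι x * c i :=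
  let ⟨⟨x, i⟩, h⟩ := hc.bijective.2 g
  ⟨x, i, h.symm⟩

theorem mul_mem_layered {L : I → Set V} {x : V} {i : I} :
    ι x * c i ∈ layered ι c L ↔ x ∈ L i := by
  simp [layered, hc.mul_eq_mul_iff]

theorem mul_mem_range (h₀ : c i₀ = 1) {x : V} {i : I} : ι x * c i ∈ range ι ↔ i = i₀ := by
  have : ι x * c i ∈ range ι ↔ ∃ y, ι y * c i₀ = ι x * c i := by simp [h₀]
  simp [this, hc.mul_eq_mul_iff, eq_comm]

theorem compl_layered (L : I → Set V) : (layered ι c L)ᶜ = layered ι c fun i => (L i)ᶜ := by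
  ext g
  obtain ⟨x, i, rfl⟩ := hc.exists_eq_mul g
  simp [hc.mul_mem_layered]

theorem switchedLayered_eq_symmDiff (h₀ : c i₀ = 1) (L : I → Set V) :
    switchedLayered ι c i₀ L = symmDiff (layered ι c L) (range ι) := by
  ext g
  obtain ⟨x, i, rfl⟩ := hc.exists_eq_mul g
  rw [switchedLayered, Set.mem_symmDiff, hc.mul_mem_layered, hc.mul_mem_layered,
    hc.mul_mem_range h₀]
  by_cases hi : i = i₀
  · subst hi; simp
  · simp [hi]

theorem inv_switchedLayered (h₀ : c i₀ = 1) {L : I → Set V}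
    (hL : (layered ι c fun i => (L i)ᶜ)⁻¹ = layered ι c fun i => (L i)ᶜ) :
    (switchedLayered ι c i₀ L)⁻¹ = switchedLayered ι c i₀ L := by
  have hL' : (layered ι c L)⁻¹ = layered ι c L := by
    rwa [← hc.compl_layered, Set.compl_inv, compl_inj_iff] at hL
  rw [hc.switchedLayered_eq_symmDiff h₀]
  ext g
  simp only [Set.mem_inv, Set.mem_symmDiff]
  rw [← Set.mem_inv, hL', ← Set.mem_inv, hc.inv_range]

theorem one_notMem_switchedLayered (h₀ : c i₀ = 1) {L : I → Set V} (hL : 0 ∈ L i₀) :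
    1 ∉ switchedLayered ι c i₀ L := by
  have h1 : (1 : G) = ι 0 * c i₀ := by rw [hc.map_zero, h₀, one_mul]
  rw [h1, switchedLayered, hc.mul_mem_layered]
  simpa using hL

theorem ncard_eq_sum [Finite V] [Fintype I] (E : Set G) :
    E.ncard = ∑ i, {x | ι x * c i ∈ E}.ncard := by
  let assemble : (Σ i, {x | ι x * c i ∈ E}) → E := fun p => ⟨ι p.2 * c p.1, p.2.2⟩
  have hassemble : assemble.Bijective := by
    constructor
    · rintro ⟨i, x, hx⟩ ⟨j, y, hy⟩ h
      obtain ⟨rfl, rfl⟩ := hc.mul_eq_mul_iff.1 (congrArg Subtype.val h)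
      rfl
    · rintro ⟨g, hg⟩
      obtain ⟨x, i, rfl⟩ := hc.exists_eq_mul g
      exact ⟨⟨i, x, hg⟩, rfl⟩
  exact (Nat.card_congr (Equiv.ofBijective assemble hassemble)).symm.trans Nat.card_sigma

theorem ncard_layered [Finite V] [Fintype I] (L : I → Set V) :
    (layered ι c L).ncard = ∑ i, (L i).ncard := by
  simp only [hc.ncard_eq_sum, hc.mul_mem_layered, ofPred_mem_eq]

theorem differenceCount_layered_map [Finite V] [Fintype I] (L : I → Set V) (w : V) :
    differenceCount (layered ι c L) (ι w) = ∑ i, (L i ∩ (· + w) ⁻¹' L i).ncard := by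
  have hmul (x : V) (i : I) : ι w * (ι x * c i) = ι (x + w) * c i := by
    rw [add_comm, hc.map_add, mul_assoc]
  simp only [differenceCount_eq_ncard_mul_left, hc.ncard_eq_sum, mem_ofPred_eq, hmul,
    hc.mul_mem_layered]
  rfl

theorem differenceCount_layered_of_mul_eq [Finite V] [Fintype I] {L : I → Set V}
    (hL : (layered ι c L)⁻¹ = layered ι c L) {g : G} {m : I → I} {w : I → V}
    (hg : ∀ i, c i * g = ι (w i) * c (m i)) :
    differenceCount (layered ι c L) g = ∑ i, (L i ∩ (· + w i) ⁻¹' L (m i)).ncard := by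
  have hmul (x : V) (i : I) : ι x * c i * g = ι (x + w i) * c (m i) := by
    rw [mul_assoc, hg, hc.map_add, mul_assoc]
  simp only [differenceCount_eq_ncard_mul_right hL, hc.ncard_eq_sum, mem_ofPred_eq, hmul,
    hc.mul_mem_layered]
  rfl

theorem exists_perm_mul [Finite I] (g : G) :
    ∃ (m : Equiv.Perm I) (w : I → V), ∀ i, c i * g = ι (w i) * c (m i) := by
  choose w m hwm using fun i => hc.exists_eq_mul (c i * g)
  have hm : Function.Injective m := by
    intro i j hij
    have h : ι (-w i) * c i = ι (-w j) * c j := by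
      rw [← mul_left_inj g, mul_assoc, mul_assoc, hwm, hwm, hij, ← mul_assoc, ← mul_assoc,
        ← hc.map_add, ← hc.map_add, neg_add_cancel, neg_add_cancel]
    exact (hc.mul_eq_mul_iff.1 h).2
  exact ⟨.ofBijective m hm.bijective_of_finite, w, hwm⟩

theorem mem_range_of_mul_eq {g : G} {x : V} {i : I} (h : c i * g = ι x * c i) : g ∈ range ι := by
  have hg : g = (c i)⁻¹ * ι x * (c i)⁻¹⁻¹ := by
    rw [inv_inv, mul_assoc, ← h, inv_mul_cancel_left]
  rw [hg]
  exact hc.conj_mem _ _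

end IsNormalTransversal

theorem isNormalTransversal_pow {V G : Type*} [AddCommGroup V] [Finite V] [Group G] {ι : V → G}
    {t : G} {l : ℕ} (hι : ∀ x y, ι (x + y) = ι x * ι y)
    (hconj : ∀ x, t * ι x * t⁻¹ ∈ range ι)
    (hdecomp : ∀ g, ∃ x, ∃ i < l, g = ι x * t ^ i)
    (hcard : Nat.card V * l = Nat.card G) :
    IsNormalTransversal ι fun i : Fin l => t ^ (i : ℕ) where
  map_add := hι
  conj_mem g x := by
    have hpow (i : ℕ) : ∃ z, t ^ i * ι x * (t ^ i)⁻¹ = ι z := by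
      induction i with
      | zero => exact ⟨x, by simp⟩
      | succ i ih =>
        obtain ⟨z, hz⟩ := ih
        obtain ⟨z', hz'⟩ := hconj z
        exact ⟨z', by rw [hz', ← hz, pow_succ']; group⟩
    obtain ⟨y, i, -, rfl⟩ := hdecomp g
    obtain ⟨z, hz⟩ := hpow i
    have hcomm : ι y * ι z * (ι y)⁻¹ = ι z := by
      rw [← hι, add_comm, hι, mul_inv_cancel_right]
    exact ⟨z, by rw [← hcomm, ← hz]; group⟩
  bijective := by
    have hsurj : Function.Surjective fun p : V × Fin l => ι p.1 * t ^ (p.2 : ℕ) := by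
      intro g
      obtain ⟨x, i, hi, rfl⟩ := hdecomp g
      exact ⟨(x, ⟨i, hi⟩), rfl⟩
    exact hsurj.bijective_of_nat_card_le (by simp [hcard])

end Layers

section Translates

theorem ncard_compl_inter_compl {α : Type*} [Finite α] (S T : Set α) :
    (Sᶜ ∩ Tᶜ).ncard + S.ncard + T.ncard = Nat.card α + (S ∩ T).ncard := by
  have hcompl := ncard_add_ncard_compl (S ∪ T)
  rw [compl_union] at hcompl
  have hunion := ncard_union_add_ncard_inter S T
  lia

theorem ncard_compl_inter {α : Type*} [Finite α] (S T : Set α) :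
    (Sᶜ ∩ T).ncard + (S ∩ T).ncard = T.ncard := by
  rw [inter_comm, ← sdiff_eq, inter_comm S, add_comm]
  exact ncard_inter_add_ncard_sdiff_eq_ncard T S

theorem ncard_preimage_add_right {V : Type*} [AddGroup V] (w : V) (T : Set V) :
    ((· + w) ⁻¹' T).ncard = T.ncard :=
  ncard_preimage_of_injective_subset_range (add_left_injective w)
    ((add_right_surjective w).range_eq ▸ subset_univ T)

variable {R V : Type*} [Ring R] [AddCommGroup V] [Module R V]

theorem ncard_inter_preimage_add_right_self (U : Submodule R V) (w : V) :
    ((U : Set V) ∩ (· + w) ⁻¹' U).ncard = if w ∈ U then Nat.card U else 0 := by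
  split_ifs with hw
  · have : (U : Set V) ∩ (· + w) ⁻¹' U = U := by
      ext x
      simp +contextual [U.add_mem_iff_left hw]
    rw [this]
    exact (Nat.card_coe_set_eq _).symm
  · have : (U : Set V) ∩ (· + w) ⁻¹' U = ∅ := by
      ext x
      simp +contextual [U.add_mem_iff_right, hw]
    rw [this, ncard_empty]

theorem ncard_inter_preimage_add_right_of_sup_eq_top {U W : Submodule R V} (h : U ⊔ W = ⊤) (w : V) :
    ((U : Set V) ∩ (· + w) ⁻¹' W).ncard = Nat.card ↥(U ⊓ W) := by
  -- For `w = u + v` with `u ∈ U` and `v ∈ W`, the set is the translate of `U ⊓ W` by `-u`.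
  obtain ⟨u, hu, v, hv, rfl⟩ := Submodule.mem_sup.1 (h ▸ Submodule.mem_top : w ∈ U ⊔ W)
  have : (U : Set V) ∩ (· + (u + v)) ⁻¹' W = (· + u) ⁻¹' (U ⊓ W : Submodule R V) := by
    ext x
    simp [← add_assoc, U.add_mem_iff_left hu, W.add_mem_iff_left hv]
  rw [this, ncard_preimage_add_right]
  exact (Nat.card_coe_set_eq _).symm

end Translates

section Hyperplanes

variable {K V : Type*} [Field K] [AddCommGroup V] [Module K V]

theorem isCoatom_iff_finrank_add_one [FiniteDimensional K V] {W : Submodule K V} :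
    IsCoatom W ↔ finrank K W + 1 = finrank K V := by
  rw [← isSimpleModule_iff_isCoatom, isSimpleModule_iff_finrank_eq_one,
    ← W.finrank_quotient_add_finrank]
  lia

theorem range_eq_setOf_isCoatom_of_finrank {I : Type*} {n : ℕ} (hn : finrank K V = n + 1)
    {A : I → Submodule K V} (hA : ∀ i, finrank K (A i) = n)
    (hAall : ∀ W : Submodule K V, finrank K W = n → ∃ i, A i = W) :
    range A = {W | IsCoatom W} := by
  have : FiniteDimensional K V := .of_finrank_eq_succ hn
  have hcoatom (W : Submodule K V) : IsCoatom W ↔ finrank K W = n := by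
    rw [isCoatom_iff_finrank_add_one, hn, add_left_inj]
  ext W
  rw [mem_ofPred_eq, hcoatom]
  exact ⟨by rintro ⟨i, rfl⟩; exact hA i, hAall W⟩

theorem finrank_inf_add_two_of_isCoatom [FiniteDimensional K V] {U W : Submodule K V}
    (hU : IsCoatom U) (hW : IsCoatom W) (h : U ≠ W) :
    finrank K ↥(U ⊓ W) + 2 = finrank K V := by
  have hsum := Submodule.finrank_sup_add_finrank_inf_eq U W
  rw [hU.sup_eq_top_of_ne hW h, finrank_top] at hsum
  rw [isCoatom_iff_finrank_add_one] at hU hW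
  lia

theorem natCard_of_isCoatom {n : ℕ} (hn : finrank K V = n + 1) {W : Submodule K V}
    (hW : IsCoatom W) : Nat.card W = Nat.card K ^ n := by
  have : FiniteDimensional K V := .of_finrank_eq_succ hn
  rw [natCard_eq_pow_finrank (K := K), Nat.add_right_cancel
    ((isCoatom_iff_finrank_add_one.1 hW).trans hn)]

theorem natCard_inf_of_isCoatom {n : ℕ} (hn : finrank K V = n + 2) {U W : Submodule K V}
    (hU : IsCoatom U) (hW : IsCoatom W) (h : U ≠ W) : Nat.card ↥(U ⊓ W) = Nat.card K ^ n := by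
  have : FiniteDimensional K V := .of_finrank_eq_succ hn
  rw [natCard_eq_pow_finrank (K := K), Nat.add_right_cancel
    ((finrank_inf_add_two_of_isCoatom hU hW h).trans hn)]

variable [Finite K]

theorem ncard_setOf_isCoatom [FiniteDimensional K V] :
    {W : Submodule K V | IsCoatom W}.ncard = ∑ i ∈ Finset.range (finrank K V), Nat.card K ^ i := by
  let annihilator : Submodule K V ≃o (Submodule K (Dual K V))ᵒᵈ :=
    Subspace.orderIsoFiniteDimensional
  have hatom (W : Submodule K V) :
      IsCoatom W ↔ finrank K ↥(OrderDual.ofDual (annihilator W)) = 1 := by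
    rw [← Submodule.isAtom_iff_finrank_eq_one, ← isCoatom_dual_iff_isAtom]
    exact (annihilator.isCoatom_iff W).symm
  rw [← Projectivization.card_of_finrank K (Dual K V) Subspace.dual_finrank_eq]
  exact Nat.card_congr (((annihilator.toEquiv.trans OrderDual.ofDual).subtypeEquiv hatom).trans
    (Projectivization.equivSubmodule K (Dual K V)).symm)

theorem ncard_setOf_isCoatom_and_mem {n : ℕ} (hn : finrank K V = n + 1) {z : V} (hz : z ≠ 0) :
    {W : Submodule K V | IsCoatom W ∧ z ∈ W}.ncard = ∑ i ∈ Finset.range n, Nat.card K ^ i := by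
  have : FiniteDimensional K V := .of_finrank_eq_succ hn
  have hquot : finrank K (V ⧸ K ∙ z) = n := by
    have := (K ∙ z).finrank_quotient_add_finrank
    rw [finrank_span_singleton hz] at this
    lia
  rw [← hquot, ← ncard_setOf_isCoatom]
  have hsurj := (K ∙ z).mkQ_surjective
  have himage : {W : Submodule K V | IsCoatom W ∧ z ∈ W} =
      Submodule.comap (K ∙ z).mkQ '' {W | IsCoatom W} := by
    ext W
    constructor
    · rintro ⟨hW, hzW⟩
      have hker : (K ∙ z).mkQ.ker ≤ W := by simpa
      exact ⟨W.map (K ∙ z).mkQ, Submodule.isCoatom_map_of_ker_le hsurj hker hW,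
        Submodule.comap_map_eq_self hker⟩
    · rintro ⟨W, hW, rfl⟩
      refine ⟨(Submodule.isCoatom_comap_iff hsurj).2 hW, ?_⟩
      exact Submodule.le_comap_mkQ _ W (Submodule.mem_span_singleton_self z)
  rw [himage, ncard_image_of_injective _ (Submodule.comap_injective_of_surjective hsurj)]

end Hyperplanes

section Counts

variable {V I G R : Type*} [AddCommGroup V] [Finite V] [Finite I] [Group G] {ι : V → G} {c : I → G}
  {i₀ : I} {a b : ℕ}

namespace IsNormalTransversal

/- In this and the next two counts, the terms moved to the left avoid truncated subtraction. -/
theorem ncard_switchedLayered_add (hc : IsNormalTransversal ι c) {L : I → Set V}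
    (hL : ∀ i, (L i).ncard = a) :
    (switchedLayered ι c i₀ L).ncard + 2 * a = Nat.card I * a + Nat.card V := by
  have := Fintype.ofFinite I
  have hlayer (i : I) : (Function.update L i₀ (L i₀)ᶜ i).ncard + (if i = i₀ then 2 * a else 0) =
      a + if i = i₀ then Nat.card V else 0 := by
    by_cases hi : i = i₀
    · subst hi
      have := ncard_add_ncard_compl (L i)
      simp only [Function.update_self, if_true]
      rw [hL] at this
      lia
    · simp [hi, hL]
  have hsum := Fintype.sum_congr _ _ hlayer
  simp only [Finset.sum_add_distrib, Fintype.sum_ite_eq'] at hsum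
  simpa [switchedLayered, hc.ncard_layered] using hsum

variable [Ring R] [Module R V] {A : I → Submodule R V}

theorem differenceCount_switchedLayered_map_add (hc : IsNormalTransversal ι c)
    (hcard : ∀ i, Nat.card (A i) = a) (w : V) :
    differenceCount (switchedLayered ι c i₀ fun i => (A i : Set V)) (ι w) + 2 * a =
      {i | w ∈ A i}.ncard * a + Nat.card V := by
  have := Fintype.ofFinite I
  set L : I → Set V := fun i => A i with hL
  have hinter (i : I) : (L i ∩ (· + w) ⁻¹' L i).ncard = if w ∈ A i then a else 0 := by
    rw [hL, ncard_inter_preimage_add_right_self, hcard]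
  have hlayer (i : I) :
      (Function.update L i₀ (L i₀)ᶜ i ∩ (· + w) ⁻¹' Function.update L i₀ (L i₀)ᶜ i).ncard +
        (if i = i₀ then 2 * a else 0) =
      (if w ∈ A i then a else 0) + if i = i₀ then Nat.card V else 0 := by
    by_cases hi : i = i₀
    · subst hi
      have hcompl := ncard_compl_inter_compl (L i) ((· + w) ⁻¹' L i)
      have ha : (L i).ncard = a := hcard i
      rw [ncard_preimage_add_right, ha, hinter] at hcompl
      simp only [Function.update_self, if_true, preimage_compl]
      lia
    · simp [hi, hinter]
  have hsum := Fintype.sum_congr _ _ hlayer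
  rw [Finset.sum_add_distrib, Finset.sum_add_distrib, Fintype.sum_ite_eq', Fintype.sum_ite_eq',
    ← Finset.sum_filter, Finset.sum_const, smul_eq_mul] at hsum
  rw [switchedLayered, hc.differenceCount_layered_map, hsum, ncard_eq_toFinset_card',
    toFinset_ofPred]

theorem differenceCount_switchedLayered_add_of_perm (hc : IsNormalTransversal ι c)
    (hD : (switchedLayered ι c i₀ fun i => (A i : Set V))⁻¹ =
      switchedLayered ι c i₀ fun i => (A i : Set V))
    (hcard : ∀ i, Nat.card (A i) = a)
    (hsup : ∀ i j, i ≠ j → A i ⊔ A j = ⊤)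
    (hinf : ∀ i j, i ≠ j → Nat.card ↥(A i ⊓ A j) = b)
    {g : G} {m : Equiv.Perm I} {w : I → V} (hg : ∀ i, c i * g = ι (w i) * c (m i))
    (hm : ∀ i, m i ≠ i) :
    differenceCount (switchedLayered ι c i₀ fun i => (A i : Set V)) g + 4 * b =
      Nat.card I * b + 2 * a := by
  have := Fintype.ofFinite I
  set L : I → Set V := fun i => A i with hL
  have hinter (i : I) : (L i ∩ (· + w i) ⁻¹' L (m i)).ncard = b := by
    rw [hL, ncard_inter_preimage_add_right_of_sup_eq_top (hsup i (m i) (hm i).symm),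
      hinf i (m i) (hm i).symm]
  have ha (i : I) : (L i).ncard = a := hcard i
  have hlayer (i : I) :
      (Function.update L i₀ (L i₀)ᶜ i ∩ (· + w i) ⁻¹' Function.update L i₀ (L i₀)ᶜ (m i)).ncard +
        ((if i = i₀ then 2 * b else 0) + if m i = i₀ then 2 * b else 0) =
      b + ((if i = i₀ then a else 0) + if m i = i₀ then a else 0) := by
    have hleft := ncard_compl_inter (L i) ((· + w i) ⁻¹' L (m i))
    have hright := ncard_compl_inter ((· + w i) ⁻¹' L (m i)) (L i)
    rw [ncard_preimage_add_right, ha, hinter] at hleft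
    rw [inter_comm, inter_comm _ (L i), ha, hinter] at hright
    by_cases hi : i = i₀
    · subst hi
      simp only [Function.update_self, Function.update_of_ne (hm i), if_true, if_neg (hm i)]
      lia
    by_cases hmi : m i = i₀
    · subst hmi
      simp only [Function.update_self, Function.update_of_ne hi, if_true, if_neg hi,
        preimage_compl]
      lia
    · simp [hi, hmi, hinter]
  have hsum := Fintype.sum_congr _ _ hlayer
  have hperm (n : ℕ) : ∑ i, (if m i = i₀ then n else 0) = n := by
    rw [Equiv.sum_comp m fun i => if i = i₀ then n else 0, Fintype.sum_ite_eq']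
  simp only [Finset.sum_add_distrib, Fintype.sum_ite_eq', hperm] at hsum
  rw [Finset.sum_const, Finset.card_univ, ← Nat.card_eq_fintype_card, smul_eq_mul,
    ← hc.differenceCount_layered_of_mul_eq hD hg, ← switchedLayered] at hsum
  lia

theorem isReversibleDDS_switchedLayered {d : ℕ} (hc : IsNormalTransversal ι c) (h₀ : c i₀ = 1)
    (hS : (layered ι c fun i => (A i : Set V)ᶜ)⁻¹ = layered ι c fun i => (A i : Set V)ᶜ)
    (hcard : ∀ i, Nat.card (A i) = a)
    (hsup : ∀ i j, i ≠ j → A i ⊔ A j = ⊤)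
    (hinf : ∀ i j, i ≠ j → Nat.card ↥(A i ⊓ A j) = b)
    (hdeg : ∀ z ≠ 0, {i | z ∈ A i}.ncard = d) :
    IsReversibleDDS (switchedLayered ι c i₀ fun i => (A i : Set V)) (range ι) (Nat.card V)
      (Nat.card I * a + Nat.card V - 2 * a) (d * a + Nat.card V - 2 * a)
      (Nat.card I * b + 2 * a - 4 * b) where
  inv_eq := hc.inv_switchedLayered h₀ hS
  one_notMem := hc.one_notMem_switchedLayered h₀ (A i₀).zero_mem
  card_eq := Nat.eq_sub_of_add_eq (hc.ncard_switchedLayered_add hcard)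
  card_base_eq :=
    have : Nonempty I := ⟨i₀⟩
    Nat.card_range_of_injective hc.injective
  count_of_mem := by
    rintro _ ⟨z, rfl⟩ hιz
    have hz : z ≠ 0 := by rintro rfl; exact hιz hc.map_zero
    rw [← hdeg z hz]
    exact Nat.eq_sub_of_add_eq (hc.differenceCount_switchedLayered_map_add hcard z)
  count_of_notMem := by
    intro g hg
    obtain ⟨m, w, hmw⟩ := hc.exists_perm_mul g
    have hm (i : I) : m i ≠ i := fun h => hg (hc.mem_range_of_mul_eq ((hmw i).trans (by rw [h])))
    exact Nat.eq_sub_of_add_eq (hc.differenceCount_switchedLayered_add_of_perm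
      (hc.inv_switchedLayered h₀ hS) hcard hsup hinf hmw hm)

end IsNormalTransversal

end Counts

theorem hyperplane_parameters_eq_iff {q : ℕ} (hq : 2 ≤ q) (n d : ℕ) :
    q ^ (n + 1) * (q - 1) + q ^ (n + 2) * d = q ^ n * (2 * q + (q * (q * d + 1) + 1) - 4) ↔
      q = 3 := by
  obtain ⟨s, rfl⟩ := Nat.exists_eq_add_of_le' hq
  have hleft : (s + 2) ^ (n + 1) * (s + 2 - 1) + (s + 2) ^ (n + 2) * d =
      (s + 2) ^ n * ((s + 2) * ((s + 2) * d) + (s + 2) * (s + 1)) := by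
    rw [show s + 2 - 1 = s + 1 from rfl]
    ring
  have hright : 2 * (s + 2) + ((s + 2) * ((s + 2) * d + 1) + 1) - 4 =
      (s + 2) * ((s + 2) * d) + 3 * (s + 1) := by
    rw [mul_add_one (s + 2)]
    lia
  rw [hleft, hright, mul_right_inj' (by positivity), add_right_inj, Nat.mul_left_inj (by simp)]

section HyperplaneFamilies

variable {K V G I : Type*} [Field K] [Finite K] [AddCommGroup V] [Module K V]
  [Group G] {A : I → Submodule K V}

theorem card_eq_of_range_eq_isCoatom [FiniteDimensional K V] (hAinj : Function.Injective A)
    (hArange : range A = {W | IsCoatom W}) :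
    Nat.card I = ∑ i ∈ Finset.range (finrank K V), Nat.card K ^ i := by
  rw [← Nat.card_range_of_injective hAinj, hArange, Nat.card_coe_set_eq, ncard_setOf_isCoatom]

theorem ncard_setOf_mem_of_range_eq_isCoatom (hAinj : Function.Injective A)
    (hArange : range A = {W | IsCoatom W}) {n : ℕ} (hn : finrank K V = n + 1) {z : V}
    (hz : z ≠ 0) :
    {i | z ∈ A i}.ncard = ∑ i ∈ Finset.range n, Nat.card K ^ i := by
  have himage : A '' (A ⁻¹' {W | z ∈ W}) = {W | IsCoatom W ∧ z ∈ W} := by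
    rw [image_preimage_eq_range_inter, hArange, ← ofPred_and]
  rw [← ncard_setOf_isCoatom_and_mem hn hz, ← himage, ncard_image_of_injective _ hAinj]
  rfl

theorem IsNormalTransversal.isReversibleDDS_hyperplanes {ι : V → G} {c : I → G} {i₀ : I}
    (hc : IsNormalTransversal ι c) (h₀ : c i₀ = 1) {q n : ℕ} (hq : Nat.card K = q)
    (hn : finrank K V = n + 2) (hAinj : Function.Injective A)
    (hArange : range A = {W | IsCoatom W})
    (hS : (layered ι c fun i => (A i : Set V)ᶜ)⁻¹ = layered ι c fun i => (A i : Set V)ᶜ) :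
    IsReversibleDDS (switchedLayered ι c i₀ fun i => (A i : Set V)) (range ι) (q ^ (n + 2))
      (q ^ (n + 1) * (Nat.card I + q - 2))
      (q ^ (n + 1) * (q - 1) + q ^ (n + 2) * ∑ i ∈ Finset.range n, q ^ i)
      (q ^ n * (2 * q + Nat.card I - 4)) := by
  have : FiniteDimensional K V := .of_finrank_eq_succ hn
  have : Finite V := Module.finite_of_finite K
  have : Finite I := .of_injective A hAinj
  set d := ∑ i ∈ Finset.range n, q ^ i
  have hcoatom (i : I) : IsCoatom (A i) := hArange.subset (mem_range_self i)
  have hdeg (z : V) (hz : z ≠ 0) : {i | z ∈ A i}.ncard = q * d + 1 := by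
    rw [ncard_setOf_mem_of_range_eq_isCoatom hAinj hArange hn hz, hq, geom_sum_succ]
  have hV : Nat.card V = q ^ (n + 2) := by rw [natCard_eq_pow_finrank (K := K), hq, hn]
  have hk : Nat.card I * q ^ (n + 1) + q ^ (n + 2) - 2 * q ^ (n + 1) =
      q ^ (n + 1) * (Nat.card I + q - 2) := by
    rw [Nat.mul_sub]
    ring_nf
  have hl1 : (q * d + 1) * q ^ (n + 1) + q ^ (n + 2) - 2 * q ^ (n + 1) =
      q ^ (n + 1) * (q - 1) + q ^ (n + 2) * d := by
    have hsub : q - 1 + q * d = q * d + 1 + q - 2 := by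
      have : 0 < q := hq ▸ Finite.card_pos
      lia
    calc
      _ = q ^ (n + 1) * (q * d + 1 + q - 2) := by rw [Nat.mul_sub]; ring_nf
      _ = _ := by rw [← hsub]; ring
  have hl2 : Nat.card I * q ^ n + 2 * q ^ (n + 1) - 4 * q ^ n =
      q ^ n * (2 * q + Nat.card I - 4) := by
    rw [Nat.mul_sub]
    ring_nf
  rw [← hk, ← hl1, ← hl2, ← hV]
  exact hc.isReversibleDDS_switchedLayered h₀ hS
    (fun i => hq ▸ natCard_of_isCoatom hn (hcoatom i))
    (fun i j hij => (hcoatom i).sup_eq_top_of_ne (hcoatom j) (hAinj.ne hij))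
    (fun i j hij => hq ▸ natCard_inf_of_isCoatom hn (hcoatom i) (hcoatom j) (hAinj.ne hij)) hdeg

theorem ddg_X2_union_X3_general {ι : V → G} {c : I → G} {i₀ : I}
    (hc : IsNormalTransversal ι c) (h₀ : c i₀ = 1) {q r k l1 l2 : ℕ} (hq : Nat.card K = q)
    (hr : 2 ≤ r) (hrank : finrank K V = r) (hAinj : Function.Injective A)
    (hArange : range A = {W | IsCoatom W})
    (hS : (layered ι c fun i => (A i : Set V)ᶜ)⁻¹ = layered ι c fun i => (A i : Set V)ᶜ)
    (hk : k = q ^ (r - 1) * (Nat.card I + q - 2))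
    (hl1 : l1 = q ^ (r - 1) * (q - 1) + q ^ r * ((q ^ (r - 2) - 1) / (q - 1)))
    (hl2 : l2 = q ^ (r - 2) * (2 * q + Nat.card I - 4)) :
    IsReversibleDDS (switchedLayered ι c i₀ fun i => (A i : Set V)) (range ι) (q ^ r) k l1 l2 ∧
      (l1 = l2 ↔ q = 3) := by
  obtain ⟨n, rfl⟩ := Nat.exists_eq_add_of_le' hr
  have : FiniteDimensional K V := .of_finrank_eq_succ hrank
  have hqtwo : 2 ≤ q := hq ▸ Finite.one_lt_card
  rw [Nat.add_sub_cancel_right, ← Nat.geomSum_eq hqtwo] at hl1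
  subst hk hl1 hl2
  refine ⟨hc.isReversibleDDS_hyperplanes h₀ hq hrank hAinj hArange hS, ?_⟩
  rw [card_eq_of_range_eq_isCoatom hAinj hArange, hrank, hq, geom_sum_succ, geom_sum_succ]
  exact hyperplane_parameters_eq_iff hqtwo n _

end HyperplaneFamilies

/-- in the setup `G = F ⋊ ⟨τ⟩` with `S` inverse-closed, the set
`D = X2 ∪ X3` is a reversible identity-free divisible difference set in `G` relative
to the subgroup `F` (the range of `ι`) with parameters
`m = l`, `n = q^r`, `k = q^(r-1)(l + q − 2)`,
`λ1 = q^(r-1)(q−1) + q^r(q^(r-2)−1)/(q−1)`, `λ2 = q^(r-2)(2q + l − 4)`;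
equivalently `Cay(G, X2 ∪ X3)` is a divisible design graph with these parameters and
canonical partition into the cosets of `F`.  Moreover `λ1 = λ2` iff `q = 3`. -/
theorem ddg_X2_union_X3
    (p e q r l : ℕ) (hp : p.Prime) (he : 1 ≤ e) (hq : q = p ^ e) (hr : 2 ≤ r)
    (hl : l = (q ^ r - 1) / (q - 1)) (hlpos : 0 < l)
    (K F : Type*) [Field K] [Field F] [Algebra K F] [Fintype K] [Fintype F]
    [DecidableEq F]
    (hcardK : Fintype.card K = q) (hcardF : Fintype.card F = q ^ r)
    (hrank : Module.finrank K F = r)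
    (σ : Fˣ) (hσ : ∀ u : Fˣ, u ∈ Subgroup.zpowers σ)
    (τ : Fˣ) (hτ : τ = σ ^ (q - 1))
    (G : Type*) [Group G] [Fintype G]
    (ι : F → G) (hι : ∀ x y : F, ι (x + y) = ι x * ι y)
    (hinj : Function.Injective ι)
    (t : G) (hconj : ∀ x : F, t * ι x * t⁻¹ = ι ((τ : F) * x))
    (horder : orderOf t = l)
    (hcardG : Fintype.card G = q ^ r * l)
    (hdecomp : ∀ g : G, ∃ (x : F) (i : ℕ), i < l ∧ g = ι x * t ^ i)
    (A : Fin l → Submodule K F)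
    (hA : ∀ i, Module.finrank K (A i) = r - 1)
    (hAinj : Function.Injective A)
    (hAall : ∀ W : Submodule K F, Module.finrank K W = r - 1 → ∃ i, A i = W)
    (X2 X3 S : Set G)
    (hX2 : X2 = ι '' ((Set.univ : Set F) \ (A ⟨0, hlpos⟩ : Set F)))
    (hX3 : X3 = {g : G | ∃ i : Fin l, (i : ℕ) ≠ 0 ∧
      ∃ y ∈ (A i : Set F), g = ι y * t ^ (i : ℕ)})
    (hS : S = {g : G | ∃ i : Fin l,
      ∃ y ∈ ((Set.univ : Set F) \ (A i : Set F)), g = ι y * t ^ (i : ℕ)})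
    (hSinv : S⁻¹ = S)
    (k l1 l2 : ℕ)
    (hk : k = q ^ (r - 1) * (l + q - 2))
    (hl1 : l1 = q ^ (r - 1) * (q - 1) + q ^ r * ((q ^ (r - 2) - 1) / (q - 1)))
    (hl2 : l2 = q ^ (r - 2) * (2 * q + l - 4)) :
    (X2 ∪ X3)⁻¹ = X2 ∪ X3 ∧
    (1 : G) ∉ X2 ∪ X3 ∧
    Nat.card (X2 ∪ X3 : Set G) = k ∧
    Nat.card (Set.range ι) = q ^ r ∧
    (∀ g : G, g ≠ 1 →
      Nat.card {pr : G × G // pr.1 ∈ X2 ∪ X3 ∧ pr.2 ∈ X2 ∪ X3 ∧ pr.1 * pr.2⁻¹ = g}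
        = if g ∈ Set.range ι then l1 else l2) ∧
    (∀ g : G, Nat.card {x : G // x * g⁻¹ ∈ X2 ∪ X3} = k) ∧
    (∀ g h : G, g ≠ h →
      Nat.card {x : G // x * g⁻¹ ∈ X2 ∪ X3 ∧ x * h⁻¹ ∈ X2 ∪ X3}
        = if g * h⁻¹ ∈ Set.range ι then l1 else l2) ∧
    (l1 = l2 ↔ q = 3) := by
  have hc : IsNormalTransversal ι fun i : Fin l => t ^ (i : ℕ) :=
    isNormalTransversal_pow hι (fun x => ⟨_, (hconj x).symm⟩) hdecomp (by simp [hcardF, hcardG])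
  have hArange : range A = {W | IsCoatom W} :=
    range_eq_setOf_isCoatom_of_finrank (by lia) hA hAall
  have hX : X2 ∪ X3 =
      switchedLayered ι (fun i : Fin l => t ^ (i : ℕ)) ⟨0, hlpos⟩ fun i => (A i : Set F) := by
    rw [switchedLayered_eq_union, hX2, hX3]
    · simp [compl_eq_univ_sdiff, Fin.ext_iff]
    · exact pow_zero t
  have hS' : layered ι (fun i : Fin l => t ^ (i : ℕ)) (fun i => (A i : Set F)ᶜ) = S := by
    simp only [layered, hS, compl_eq_univ_sdiff]
  obtain ⟨h, hiff⟩ := ddg_X2_union_X3_general (k := k) hc (i₀ := ⟨0, hlpos⟩) (pow_zero t)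
    (by simp [hcardK]) hr hrank hAinj hArange (by rw [hS', hSinv]) (by simpa using hk) hl1
    (by simpa using hl2)
  rw [← hX] at h
  exact ⟨h.inv_eq, h.one_notMem, h.card_eq, h.card_base_eq, fun _ hg => h.differenceCount_eq_ite hg,
    h.card_neighbors, fun _ _ hgh => h.card_common_neighbors hgh, hiff⟩
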